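/- arXiv:math/9807055 — 3 statements merged into one kernel-verified Lean document; each statement's English description precedes it below -/
import Mathlib

section
/- Let A and B be 3 × 3 real symmetric matrices with trace A = trace B = 0, let λ₊ be the smallest eigenvalue of A and λ₋ the smallest eigenvalue of B, and let s be a real number. If s/6 + λ₊ + λ₋ ≥ 0, then s/√6 ≥ ‖A‖_F + ‖B‖_F. -/
open Matrix

/-!
Let `x i` be real numbers with sum zero, indexed by a set of size `N`, and let `a` be a lower bound
for them. The numbers `x i - a` are non-negative with sum `-N a`, so the sum of their squares, which
is `∑ x i ^ 2 + N a ^ 2`, is at most `N ^ 2 a ^ 2`. For the eigenvalues of a trace-free Hermitian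
matrix `A` of size `N` this reads `‖A‖_F ≤ √(N (N - 1)) · (-a)`, and the constant is `√6` for
`N = 3`.
-/

theorem sum_sq_le_of_sum_eq_zero {ι R : Type*} [CommRing R] [LinearOrder R] [IsStrictOrderedRing R]
    {s : Finset ι} {x : ι → R} {a : R} (hsum : ∑ i ∈ s, x i = 0) (ha : ∀ i ∈ s, a ≤ x i) :
    ∑ i ∈ s, x i ^ 2 ≤ s.card * (s.card - 1) * a ^ 2 := by
  have sum_shift : ∑ i ∈ s, (x i - a) = -(s.card * a) := by
    rw [Finset.sum_sub_distrib, hsum, Finset.sum_const, nsmul_eq_mul, zero_sub]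
  have sum_shift_sq : ∑ i ∈ s, (x i - a) ^ 2 = ∑ i ∈ s, x i ^ 2 + s.card * a ^ 2 := by
    simp only [sub_sq, Finset.sum_add_distrib, Finset.sum_sub_distrib, ← Finset.sum_mul,
      ← Finset.mul_sum, hsum, Finset.sum_const, nsmul_eq_mul, mul_zero, zero_mul, sub_zero]
  have shift_le : ∑ i ∈ s, (x i - a) ^ 2 ≤ (∑ i ∈ s, (x i - a)) ^ 2 :=
    Finset.sum_sq_le_sq_sum_of_nonneg fun i hi ↦ sub_nonneg.2 (ha i hi)
  rw [sum_shift, sum_shift_sq] at shift_le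
  linear_combination shift_le

section Hermitian

variable {n 𝕜 : Type*} [Fintype n] [DecidableEq n] [RCLike 𝕜] {A : Matrix n n 𝕜}

theorem trace_pow_eq_sum_eigenvalues_pow (hA : A.IsHermitian) (k : ℕ) :
    (A ^ k).trace = ∑ i, (hA.eigenvalues i : 𝕜) ^ k := by
  conv_lhs =>
    rw [hA.spectral_theorem, ← map_pow, diagonal_pow, Unitary.conjStarAlgAut_apply,
      trace_mul_cycle, Unitary.coe_star_mul_self, one_mul, trace_diagonal]
  rfl

theorem re_trace_conjTranspose_mul_self_eq_sum_eigenvalues_sq (hA : A.IsHermitian) :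
    RCLike.re (Aᴴ * A).trace = ∑ i, hA.eigenvalues i ^ 2 := by
  rw [hA.eq, ← sq, trace_pow_eq_sum_eigenvalues_pow hA]
  simp only [← RCLike.ofReal_pow, map_sum, RCLike.ofReal_re]

theorem sum_eigenvalues_eq_zero (hA : A.IsHermitian) (htr : A.trace = 0) :
    ∑ i, hA.eigenvalues i = 0 := by
  rw [hA.trace_eq_sum_eigenvalues] at htr
  exact_mod_cast htr

theorem nonpos_of_le_eigenvalues [Nonempty n] (hA : A.IsHermitian) (htr : A.trace = 0) {a : ℝ}
    (ha : ∀ i, a ≤ hA.eigenvalues i) : a ≤ 0 := by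
  by_contra! ha_pos
  exact (Finset.sum_pos (fun i _ ↦ ha_pos.trans_le (ha i)) Finset.univ_nonempty).ne'
    (sum_eigenvalues_eq_zero hA htr)

theorem frobenius_le_of_le_eigenvalues [Nonempty n] (hA : A.IsHermitian) (htr : A.trace = 0)
    {a : ℝ} (ha : ∀ i, a ≤ hA.eigenvalues i) :
    √(RCLike.re (Aᴴ * A).trace) ≤ √(Fintype.card n * (Fintype.card n - 1)) * -a := by
  have neg_a_nonneg : 0 ≤ -a := neg_nonneg.2 (nonpos_of_le_eigenvalues hA htr ha)
  calc √(RCLike.re (Aᴴ * A).trace)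
      = √(∑ i, hA.eigenvalues i ^ 2) := by
        rw [re_trace_conjTranspose_mul_self_eq_sum_eigenvalues_sq hA]
    _ ≤ √(Fintype.card n * (Fintype.card n - 1) * a ^ 2) :=
        Real.sqrt_le_sqrt <|
          sum_sq_le_of_sum_eq_zero (sum_eigenvalues_eq_zero hA htr) fun i _ ↦ ha i
    _ = √(Fintype.card n * (Fintype.card n - 1)) * -a := by
        rw [← neg_sq a, Real.sqrt_mul' _ (sq_nonneg _), Real.sqrt_sq neg_a_nonneg]

theorem scalar_ge_sum_frobenius_general [Nontrivial n] {B : Matrix n n 𝕜}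
    (hA : A.IsHermitian) (hB : B.IsHermitian) (htrA : A.trace = 0) (htrB : B.trace = 0)
    {a b s : ℝ} (ha : ∀ i, a ≤ hA.eigenvalues i) (hb : ∀ i, b ≤ hB.eigenvalues i)
    (h : 0 ≤ s / (Fintype.card n * (Fintype.card n - 1)) + a + b) :
    √(RCLike.re (Aᴴ * A).trace) + √(RCLike.re (Bᴴ * B).trace) ≤
      s / √(Fintype.card n * (Fintype.card n - 1)) := by
  have hA_le := frobenius_le_of_le_eigenvalues hA htrA ha
  have hB_le := frobenius_le_of_le_eigenvalues hB htrB hb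
  set c : ℝ := Fintype.card n * (Fintype.card n - 1)
  calc √(RCLike.re (Aᴴ * A).trace) + √(RCLike.re (Bᴴ * B).trace)
      ≤ √c * (-a - b) := by linear_combination hA_le + hB_le
    _ ≤ √c * (s / c) := by gcongr; linarith
    _ = s / √c := by rw [mul_div_left_comm, Real.sqrt_div_self, div_eq_mul_inv]

end Hermitian

/-- Algebraic core of Lemma 1: if `A`, `B` are trace-free 3×3 real symmetric matrices with
smallest eigenvalues `lamP`, `lamM` respectively, and `s/6 + lamP + lamM ≥ 0`, then
`s/√6 ≥ ‖A‖_F + ‖B‖_F`, where `‖A‖_F = √(trace (Aᵀ A))`. -/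
theorem scalar_ge_sum_frobenius
    (A B : Matrix (Fin 3) (Fin 3) ℝ) (hA : A.IsHermitian) (hB : B.IsHermitian)
    (htrA : A.trace = 0) (htrB : B.trace = 0)
    (lamP lamM s : ℝ)
    (hlamP : IsLeast (Set.range hA.eigenvalues) lamP)
    (hlamM : IsLeast (Set.range hB.eigenvalues) lamM)
    (h : s / 6 + lamP + lamM ≥ 0) :
    s / Real.sqrt 6 ≥ Real.sqrt ((Aᵀ * A).trace) + Real.sqrt ((Bᵀ * B).trace) := by
  have card_mul_pred : (Fintype.card (Fin 3) * (Fintype.card (Fin 3) - 1) : ℝ) = 6 := by norm_num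
  simpa only [card_mul_pred, conjTranspose_eq_transpose_of_trivial, RCLike.re_to_real] using
    scalar_ge_sum_frobenius_general hA hB htrA htrB (Set.forall_mem_range.1 hlamP.2)
      (Set.forall_mem_range.1 hlamM.2) (card_mul_pred ▸ h)
end

section
/- Let a, b, c be real numbers with a + b + c = 0. Then 3√6 · abc = (a² + b² + c²)^{3/2} holds if and only if there exists t ≥ 0 such that, as a multiset, {a, b, c} = {2t, −t, −t}; in particular, equality forces at most two distinct values among a, b, c. -/
/-!
When `a + b + c = 0`, the gap `(a² + b² + c²)³ - 54 (abc)²` is twice the discriminant of the cubic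
`(X - a) (X - b) (X - c)`. Equality therefore holds exactly when two of the numbers coincide and
`abc ≥ 0`: the former puts the triple in the form `{2t, -t, -t}`, where `abc = 2t³`, and the latter
then says that `t ≥ 0`.
-/

theorem sum_sq_pow_three_eq_of_add_eq_zero {R : Type*} [CommRing R] {a b c : R}
    (hsum : a + b + c = 0) :
    (a ^ 2 + b ^ 2 + c ^ 2) ^ 3 =
      54 * (a * b * c) ^ 2 + 2 * ((a - b) * (b - c) * (a - c)) ^ 2 := by
  obtain rfl : c = -(a + b) := eq_neg_of_add_eq_zero_right hsum
  ring

theorem eq_sqrt_pow_iff {x q : ℝ} (hq : 0 ≤ q) (n : ℕ) :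
    x = √q ^ n ↔ 0 ≤ x ∧ x ^ 2 = q ^ n := by
  have sq_sqrt_pow : (√q ^ n) ^ 2 = q ^ n := by rw [pow_right_comm, Real.sq_sqrt hq]
  have sqrt_pow_nonneg : 0 ≤ √q ^ n := by positivity
  constructor
  · rintro rfl
    exact ⟨sqrt_pow_nonneg, sq_sqrt_pow⟩
  · rintro ⟨hx, hsq⟩
    exact (pow_left_inj₀ hx sqrt_pow_nonneg two_ne_zero).mp (hsq.trans sq_sqrt_pow.symm)

theorem three_mul_sqrt_six_mul_eq_sqrt_pow_three_iff {a b c : ℝ} (hsum : a + b + c = 0) :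
    3 * √6 * (a * b * c) = √(a ^ 2 + b ^ 2 + c ^ 2) ^ 3 ↔
      0 ≤ a * b * c ∧ (a = b ∨ b = c ∨ a = c) := by
  have sq_lhs : (3 * √6 * (a * b * c)) ^ 2 = 54 * (a * b * c) ^ 2 := by
    rw [mul_pow, mul_pow, Real.sq_sqrt (by norm_num)]
    norm_num
  rw [eq_sqrt_pow_iff (by positivity), mul_nonneg_iff_of_pos_left (by positivity), sq_lhs,
    sum_sq_pow_three_eq_of_add_eq_zero hsum, left_eq_add]
  simp only [mul_eq_zero, OfNat.ofNat_ne_zero, false_or, pow_eq_zero_iff two_ne_zero,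
    sub_eq_zero, or_assoc]

theorem exists_multiset_triple_eq_iff {α : Type*} {a b c : α} :
    (∃ x y : α, ({a, b, c} : Multiset α) = {x, y, y}) ↔ a = b ∨ b = c ∨ a = c := by
  constructor
  · rintro ⟨x, y, hxy⟩
    have not_nodup : ¬({a, b, c} : Multiset α).Nodup := by
      rw [hxy]
      simp
    contrapose! not_nodup
    simpa [and_assoc, and_comm, and_left_comm] using not_nodup
  · rintro (rfl | rfl | rfl)
    · exact ⟨c, a, Multiset.add_comm {a, a} {c}⟩
    · exact ⟨a, b, rfl⟩
    · exact ⟨b, a, Multiset.cons_swap a b {a}⟩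

theorem exists_multiset_eq_two_mul_neg_neg_iff {R : Type*} [CommRing R] {a b c : R}
    (hsum : a + b + c = 0) :
    (∃ t : R, ({a, b, c} : Multiset R) = {2 * t, -t, -t}) ↔ a = b ∨ b = c ∨ a = c := by
  rw [← exists_multiset_triple_eq_iff]
  constructor
  · rintro ⟨t, ht⟩
    exact ⟨2 * t, -t, ht⟩
  · rintro ⟨x, y, hxy⟩
    have sum_eq := congrArg Multiset.sum hxy
    simp only [Multiset.insert_eq_cons, Multiset.sum_cons, Multiset.sum_singleton] at sum_eq
    obtain rfl : x = 2 * -y := by linear_combination hsum - sum_eq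
    exact ⟨-y, by rwa [neg_neg]⟩

theorem mul_mul_eq_two_mul_pow_three_of_multiset_eq {R : Type*} [CommRing R] {a b c t : R}
    (h : ({a, b, c} : Multiset R) = {2 * t, -t, -t}) : a * b * c = 2 * t ^ 3 := by
  have prod_eq := congrArg Multiset.prod h
  simp only [Multiset.insert_eq_cons, Multiset.prod_cons, Multiset.prod_singleton] at prod_eq
  linear_combination prod_eq

theorem exists_nonneg_multiset_eq_two_mul_neg_neg_iff {R : Type*} [CommRing R] [LinearOrder R]
    [IsStrictOrderedRing R] {a b c : R} (hsum : a + b + c = 0) :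
    (∃ t : R, 0 ≤ t ∧ ({a, b, c} : Multiset R) = {2 * t, -t, -t}) ↔
      0 ≤ a * b * c ∧ (a = b ∨ b = c ∨ a = c) := by
  have nonneg_iff {t : R} (h : ({a, b, c} : Multiset R) = {2 * t, -t, -t}) :
      0 ≤ t ↔ 0 ≤ a * b * c := by
    rw [mul_mul_eq_two_mul_pow_three_of_multiset_eq h, mul_nonneg_iff_of_pos_left two_pos,
      Odd.pow_nonneg_iff (by decide)]
  rw [← exists_multiset_eq_two_mul_neg_neg_iff hsum, ← exists_and_left]
  exact exists_congr fun t => and_congr_left nonneg_iff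

/-- Equality case of the sharp inequality `3√6·abc ≤ (a² + b² + c²)^(3/2)` for reals summing
to zero: equality holds iff, as a multiset, `{a, b, c} = {2t, −t, −t}` for some `t ≥ 0`;
in particular, equality forces at most two distinct values among `a`, `b`, `c`. -/
theorem det_equality_case_scalar (a b c : ℝ) (hsum : a + b + c = 0) :
    (3 * Real.sqrt 6 * (a * b * c) = Real.sqrt (a ^ 2 + b ^ 2 + c ^ 2) ^ 3 ↔
      ∃ t : ℝ, 0 ≤ t ∧ ({a, b, c} : Multiset ℝ) = ({2 * t, -t, -t} : Multiset ℝ)) ∧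
    (3 * Real.sqrt 6 * (a * b * c) = Real.sqrt (a ^ 2 + b ^ 2 + c ^ 2) ^ 3 →
      a = b ∨ b = c ∨ a = c) := by
  have equality_iff := three_mul_sqrt_six_mul_eq_sqrt_pow_three_iff hsum
  exact ⟨equality_iff.trans (exists_nonneg_multiset_eq_two_mul_neg_neg_iff hsum).symm,
    fun h => (equality_iff.mp h).2⟩
end

section
/- Let W be a 3 × 3 real symmetric matrix with trace W = 0. Then 3√6 · det W ≤ ‖W‖_F³, where ‖W‖_F = √(trace(Wᵀ W)) is the Frobenius norm. -/
open Matrix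

/-!
Let `a`, `b`, `c` be the eigenvalues of `W`, so that `a + b + c = 0`. The discriminant
`((a - b) * (b - c) * (c - a)) ^ 2` of the characteristic polynomial is then
`(a ^ 2 + b ^ 2 + c ^ 2) ^ 3 / 2 - 27 * (a * b * c) ^ 2`, and it is nonnegative because the
eigenvalues are real.
-/

theorem sum_sq_pow_three_eq_of_sum_eq_zero {R : Type*} [CommRing R] {a b c : R}
    (h : a + b + c = 0) :
    (a ^ 2 + b ^ 2 + c ^ 2) ^ 3 =
      54 * (a * b * c) ^ 2 + 2 * ((a - b) * (b - c) * (c - a)) ^ 2 := by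
  obtain rfl : c = -(a + b) := (neg_eq_of_add_eq_zero_right h).symm
  ring

theorem mul_sq_prod_le_sum_sq_pow_three_of_sum_eq_zero {R : Type*} [CommRing R] [LinearOrder R]
    [IsOrderedRing R] {a b c : R} (h : a + b + c = 0) :
    54 * (a * b * c) ^ 2 ≤ (a ^ 2 + b ^ 2 + c ^ 2) ^ 3 := by
  rw [sum_sq_pow_three_eq_of_sum_eq_zero h]
  exact le_add_of_nonneg_right (mul_nonneg zero_le_two (sq_nonneg _))

theorem mul_abs_prod_le_sqrt_sum_sq_pow_three_of_sum_eq_zero {a b c : ℝ} (h : a + b + c = 0) :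
    3 * √6 * |a * b * c| ≤ √(a ^ 2 + b ^ 2 + c ^ 2) ^ 3 := by
  refine le_of_sq_le_sq ?_ (by positivity)
  calc (3 * √6 * |a * b * c|) ^ 2
      = 54 * (a * b * c) ^ 2 := by
        rw [mul_pow, mul_pow, Real.sq_sqrt (by norm_num), sq_abs]
        norm_num
    _ ≤ (a ^ 2 + b ^ 2 + c ^ 2) ^ 3 := mul_sq_prod_le_sum_sq_pow_three_of_sum_eq_zero h
    _ = (√(a ^ 2 + b ^ 2 + c ^ 2) ^ 3) ^ 2 := by
        rw [pow_right_comm, Real.sq_sqrt (by positivity)]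

section Hermitian

variable {𝕜 n : Type*} [RCLike 𝕜] [Fintype n] [DecidableEq n] {W : Matrix n n 𝕜}

theorem trace_pow_eq_sum_eigenvalues_pow_s5 (hW : W.IsHermitian) (k : ℕ) :
    (W ^ k).trace = ∑ i, (hW.eigenvalues i : 𝕜) ^ k := by
  conv_lhs => rw [hW.spectral_theorem, ← map_pow, diagonal_pow,
    Unitary.conjStarAlgAut_apply, trace_mul_cycle]
  simp [trace_diagonal]

theorem re_trace_conjTranspose_mul_self_eq_sum_sq_eigenvalues (hW : W.IsHermitian) :
    RCLike.re (Wᴴ * W).trace = ∑ i, hW.eigenvalues i ^ 2 := by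
  rw [hW.eq, ← sq, trace_pow_eq_sum_eigenvalues_pow_s5 hW]
  exact_mod_cast RCLike.ofReal_re (K := 𝕜) _

theorem norm_det_eq_abs_prod_eigenvalues (hW : W.IsHermitian) :
    ‖W.det‖ = |∏ i, hW.eigenvalues i| := by
  rw [hW.det_eq_prod_eigenvalues, ← RCLike.ofReal_prod, RCLike.norm_ofReal]

theorem sum_eigenvalues_eq_zero_of_trace_eq_zero (hW : W.IsHermitian) (htr : W.trace = 0) :
    ∑ i, hW.eigenvalues i = 0 := by
  rw [hW.trace_eq_sum_eigenvalues] at htr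
  exact_mod_cast htr

theorem det_le_frobenius_cubed_general (hn : Fintype.card n = 3) (hW : W.IsHermitian)
    (htr : W.trace = 0) :
    3 * √6 * ‖W.det‖ ≤ √(RCLike.re (Wᴴ * W).trace) ^ 3 := by
  have hsum := sum_eigenvalues_eq_zero_of_trace_eq_zero hW htr
  rw [norm_det_eq_abs_prod_eigenvalues hW,
    re_trace_conjTranspose_mul_self_eq_sum_sq_eigenvalues hW]
  let e := (Fintype.equivFinOfCardEq hn).symm
  simp only [← e.sum_comp, ← e.prod_comp, Fin.sum_univ_three, Fin.prod_univ_three] at hsum ⊢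
  exact mul_abs_prod_le_sqrt_sum_sq_pow_three_of_sum_eq_zero hsum

end Hermitian

/-- Sharp determinant inequality for a trace-free 3×3 real symmetric matrix:
`3√6 · det W ≤ ‖W‖_F³`, where `‖W‖_F = √(trace (Wᵀ W))` is the Frobenius norm. -/
theorem det_le_frobenius_cubed
    (W : Matrix (Fin 3) (Fin 3) ℝ) (hW : W.IsHermitian) (htr : W.trace = 0) :
    3 * Real.sqrt 6 * W.det ≤ Real.sqrt ((Wᵀ * W).trace) ^ 3 := by
  have hle : 3 * √6 * W.det ≤ 3 * √6 * ‖W.det‖ := by gcongr; exact Real.le_norm_self _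
  exact hle.trans (det_le_frobenius_cubed_general (Fintype.card_fin 3) hW htr)
end
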